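/- arXiv:1805.12345 — 4 statements merged into one kernel-verified Lean document; each statement's English description precedes it below -/
import Mathlib

section
/- Suppose gcd(n,q)=1, (r+δ-1) | n, and set ρ = n/(r+δ-1). Let ℓ_1 < ℓ_2 < ... < ℓ_{δ-1} be an arithmetic progression of δ-1 integers with common difference b, where gcd(b,n)=1. Let ξ be a primitive n-th root of unity in the splitting field F_{q^s} of x^n - 1 over F_q, and consider the (δ-1)ρ vectors h_j^{(ℓ_i)} = (1, ξ^{j(r+δ-1)+ℓ_i}, ξ^{2(j(r+δ-1)+ℓ_i)}, ..., ξ^{(n-1)(j(r+δ-1)+ℓ_i)}) ∈ F_{q^s}^n for i = 1,...,δ-1 and j = 1,...,ρ. Define, for i = 1,...,δ-1, the vector V_i ∈ F_{q^s}^n whose coordinate at position m is (ξ^{ρℓ_i})^{m/ρ} if ρ divides m (for m = 0, ρ, 2ρ, ..., (r+δ-2)ρ) and 0 otherwise. Then every cyclic shift of every V_i lies in the F_{q^s}-linear span of the vectors h_j^{(ℓ_i)}. -/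
open Polynomial

/-!
A cyclic shift multiplies the vector `(1, z, ..., z ^ (n - 1))`, for an `n`-th root of unity `z`,
by `z⁻¹`, so the span of such vectors is invariant under cyclic shifts and only the unshifted
`V_i` need be considered. Now put `ω = ξ ^ (r + δ - 1)`, a primitive `ρ`-th root of unity, and
`z = ξ ^ ℓ_i`. By orthogonality of the powers of `ω`, averaging the vectors `h_j^{(ℓ_i)}`, whose
entry at `m` is `(ω ^ j * z) ^ m`, over `j` keeps `z ^ m` where `ρ ∣ m` and kills every other
entry: the average is `V_i`.
-/

/-- The vector `(1, z, ..., z ^ (n - 1))`; the rows `h_j^{(ℓ_i)}` are of this form, with `z` a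
power of `ξ`. -/
def powVec {M : Type*} [Monoid M] (n : ℕ) (z : M) : Fin n → M :=
  fun m => z ^ (m : ℕ)

/-- The vector `(1, z, ..., z ^ (n - 1))` with the entries at the positions not divisible by `ρ`
replaced by `0`; the vectors `V_i` are of this form. -/
def combVec {M : Type*} [MonoidWithZero M] (n ρ : ℕ) (z : M) : Fin n → M :=
  fun m => if ρ ∣ (m : ℕ) then z ^ (m : ℕ) else 0

lemma combVec_mul_of_pow_eq_one {M : Type*} [CommMonoidWithZero M] (n : ℕ) {ρ : ℕ} {ω : M}
    (hω : ω ^ ρ = 1) (z : M) : combVec n ρ (ω * z) = combVec n ρ z := by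
  ext m
  refine ite_congr rfl (fun hdvd => ?_) fun _ => rfl
  obtain ⟨k, hk⟩ := hdvd
  rw [mul_pow, hk, pow_mul ω, hω, one_pow, one_mul]

/-- The cyclic shift `(v_0, ..., v_{n-1}) ↦ (v_{n-1}, v_0, ..., v_{n-2})` as a linear map; the
subtraction in `Fin n` is modulo `n`. -/
def cyclicShift (R : Type*) [Semiring R] (n : ℕ) [NeZero n] : Module.End R (Fin n → R) :=
  LinearMap.funLeft R R fun x => x - 1

section Semiring

variable {R : Type*} [Semiring R] {n : ℕ} [NeZero n]

lemma cyclicShift_powVec {z : R} (hz : z ^ n = 1) :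
    cyclicShift R n (powVec n z) = z ^ (n - 1) • powVec n z := by
  ext x
  have hadd : z ^ ((x - 1 : Fin n) : ℕ) * z = z ^ (x : ℕ) := by
    conv_rhs => rw [← sub_add_cancel x 1]
    rw [Fin.val_add, ← pow_eq_pow_mod _ hz, pow_add, Fin.val_one', ← pow_eq_pow_mod _ hz, pow_one]
  calc z ^ ((x - 1 : Fin n) : ℕ)
      = z ^ ((x - 1 : Fin n) : ℕ) * z * z ^ (n - 1) := by
        rw [mul_assoc, mul_pow_sub_one (NeZero.ne n), hz, mul_one]
    _ = z ^ (n - 1) * z ^ (x : ℕ) := by rw [hadd, pow_mul_comm]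

lemma span_range_powVec_mem_invtSubmodule_cyclicShift {ι : Type*} {z : ι → R}
    (hz : ∀ i, z i ^ n = 1) :
    Submodule.span R (Set.range fun i => powVec n (z i)) ∈ (cyclicShift R n).invtSubmodule := by
  rw [Module.End.mem_invtSubmodule, Submodule.span_le]
  rintro _ ⟨i, rfl⟩
  rw [SetLike.mem_coe, Submodule.mem_comap, cyclicShift_powVec (hz i)]
  exact Submodule.smul_mem _ _ (Submodule.subset_span ⟨i, rfl⟩)

end Semiring

section IsPrimitiveRoot

variable {R : Type*} [CommRing R] [IsDomain R] {ρ : ℕ} {ω : R}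

lemma sum_pow_pow_eq_ite_of_isPrimitiveRoot (hω : IsPrimitiveRoot ω ρ) (m : ℕ) :
    ∑ j : Fin ρ, (ω ^ (j : ℕ)) ^ m = if ρ ∣ m then (ρ : R) else 0 := by
  simp_rw [pow_right_comm ω _ m]
  split_ifs with hdvd
  · simp [(hω.pow_eq_one_iff_dvd m).2 hdvd]
  · have hne : ω ^ m - 1 ≠ 0 := sub_ne_zero.2 fun h => hdvd ((hω.pow_eq_one_iff_dvd m).1 h)
    refine (mul_eq_zero.1 ?_).resolve_left hne
    rw [Fin.sum_univ_eq_sum_range (fun j => (ω ^ m) ^ j), mul_geom_sum, pow_right_comm,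
      hω.pow_eq_one, one_pow, sub_self]

lemma sum_powVec_eq_smul_combVec (n : ℕ) (hω : IsPrimitiveRoot ω ρ) (z : R) :
    ∑ j : Fin ρ, powVec n (ω ^ (j : ℕ) * z) = (ρ : R) • combVec n ρ z := by
  ext m
  simp only [Finset.sum_apply, powVec, combVec, Pi.smul_apply, smul_eq_mul, mul_pow,
    ← Finset.sum_mul, sum_pow_pow_eq_ite_of_isPrimitiveRoot hω, ite_mul, mul_ite, zero_mul,
    mul_zero]

end IsPrimitiveRoot

section Field

variable {K : Type*} [Field K] {n ρ : ℕ}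

lemma combVec_mem_span_range_powVec (n : ℕ) [NeZero ρ] {ω : K} (hω : IsPrimitiveRoot ω ρ) (z : K) :
    combVec n ρ z ∈ Submodule.span K (Set.range fun j : Fin ρ => powVec n (ω ^ (j : ℕ) * z)) := by
  have hρ : (ρ : K) ≠ 0 := hω.neZero'.ne
  rw [← inv_smul_smul₀ hρ (combVec n ρ z), ← sum_powVec_eq_smul_combVec n hω]
  exact Submodule.smul_mem _ _ (Submodule.sum_mem _ fun j _ => Submodule.subset_span ⟨j, rfl⟩)

lemma cyclicShift_iterate_combVec_mem_span_range_powVec [NeZero n] (hdvd : ρ ∣ n) {ω z : K}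
    (hω : IsPrimitiveRoot ω ρ) (hz : z ^ n = 1) (t : ℕ) :
    (cyclicShift K n)^[t] (combVec n ρ z) ∈
      Submodule.span K (Set.range fun j : Fin ρ => powVec n (ω ^ (j : ℕ) * z)) := by
  have : NeZero ρ := ⟨ne_zero_of_dvd_ne_zero (NeZero.ne n) hdvd⟩
  have hroot (j : Fin ρ) : (ω ^ (j : ℕ) * z) ^ n = 1 := by
    rw [mul_pow, hz, pow_right_comm, (hω.pow_eq_one_iff_dvd n).2 hdvd, one_pow, one_mul]
  have hinv := span_range_powVec_mem_invtSubmodule_cyclicShift hroot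
  exact ((Module.End.mem_invtSubmodule_iff_mapsTo _).1 hinv).iterate t
    (combVec_mem_span_range_powVec n hω z)

theorem shifts_mem_span_of_rows_general [NeZero n] {N : ℕ} (hn : n = N * ρ) {ξ : K}
    (hξ : IsPrimitiveRoot ξ n) (e : ℤ) {h : Fin ρ → Fin n → K}
    (hh : ∀ j m, h j m = ξ ^ ((m : ℤ) * (((j : ℕ) + 1 : ℤ) * (N : ℤ) + e))) {v : Fin n → K}
    (hv : ∀ m, v m = if ρ ∣ (m : ℕ) then (ξ ^ ((ρ : ℤ) * e)) ^ ((m : ℕ) / ρ) else 0) (t : ℕ) :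
    (fun (w : Fin n → K) (x : Fin n) => w (x - 1))^[t] v ∈ Submodule.span K (Set.range h) := by
  have hξ0 : ξ ≠ 0 := hξ.ne_zero (NeZero.ne n)
  have hω : IsPrimitiveRoot (ξ ^ N) ρ := hξ.pow (NeZero.pos n) hn
  have hroot : (ξ ^ N * ξ ^ e) ^ n = 1 := by
    rw [← zpow_natCast ξ N, ← zpow_add₀ hξ0, ← zpow_natCast, zpow_comm, zpow_natCast,
      hξ.pow_eq_one, one_zpow]
  -- The rows are numbered from `j = 1` but `Fin ρ` from `0`, so the extra factor `ω` joins `z`.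
  have hrow : h = fun j : Fin ρ => powVec n ((ξ ^ N) ^ (j : ℕ) * (ξ ^ N * ξ ^ e)) := by
    ext j m
    rw [hh, powVec, ← mul_assoc, ← pow_succ, ← pow_mul, ← zpow_natCast ξ, ← zpow_add₀ hξ0,
      ← zpow_natCast, ← zpow_mul]
    congr 1
    push_cast
    ring
  have hcomb : v = combVec n ρ (ξ ^ N * ξ ^ e) := by
    rw [combVec_mul_of_pow_eq_one n hω.pow_eq_one]
    ext m
    rw [hv]
    refine ite_congr rfl (fun hdvd => ?_) fun _ => rfl
    rw [mul_comm, zpow_mul, zpow_natCast, ← pow_mul, Nat.mul_div_cancel' hdvd]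
  rw [hrow, hcomb]
  exact cyclicShift_iterate_combVec_mem_span_range_powVec (hn ▸ dvd_mul_left ρ N) hω hroot t

end Field

/-- Lemma 2: with `ρ = n/(r+δ-1)`, an arithmetic progression `ℓ_i = ℓ + i·b`
(`i = 0, ..., δ-2`) with `gcd(b,n) = 1`, the vectors
`h_j^{(ℓ_i)} = (1, ξ^{j(r+δ-1)+ℓ_i}, ξ^{2(j(r+δ-1)+ℓ_i)}, ..., ξ^{(n-1)(j(r+δ-1)+ℓ_i)})`
(`j = 1, ..., ρ`), and the vectors `V_i` supported on the positions divisible by `ρ`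
with value `(ξ^{ρℓ_i})^{m/ρ}` at position `m`, every cyclic shift of every `V_i` lies in
the `F_{q^s}`-linear span of the vectors `h_j^{(ℓ_i)}`. -/
theorem shifts_mem_span_of_rows (F K : Type*) [Field F] [Fintype F] [Field K] [Algebra F K]
    (q n r δ : ℕ) (hq : Fintype.card F = q) [NeZero n] (hcop : Nat.Coprime n q)
    (hr : 1 ≤ r) (hδ : 2 ≤ δ) (hdvd : (r + δ - 1) ∣ n)
    (ρ : ℕ) (hρ : ρ = n / (r + δ - 1))
    (ξ : K) (hξ : IsPrimitiveRoot ξ n)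
    (ℓ b : ℤ) (hbpos : 0 < b) (hb : Int.gcd b n = 1)
    (h : Fin (δ - 1) → Fin ρ → Fin n → K)
    (hh : ∀ i j m', h i j m' =
      ξ ^ ((m' : ℤ) * (((j : ℕ) + 1 : ℤ) * ((r + δ - 1 : ℕ) : ℤ) + (ℓ + (i : ℕ) * b))))
    (V : Fin (δ - 1) → Fin n → K)
    (hV : ∀ i m', V i m' = if ρ ∣ (m' : ℕ)
        then (ξ ^ ((ρ : ℤ) * (ℓ + (i : ℕ) * b))) ^ ((m' : ℕ) / ρ) else 0) :
    ∀ i : Fin (δ - 1), ∀ t : ℕ,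
      (fun v : Fin n → K => fun x : Fin n => v (x - 1))^[t] (V i) ∈
        Submodule.span K (Set.range fun p : Fin (δ - 1) × Fin ρ => h p.1 p.2) := by
  intro i t
  exact Submodule.span_mono (Set.range_subset_iff.2 fun j => Set.mem_range_self (i, j))
    (shifts_mem_span_of_rows_general (by rw [hρ, Nat.mul_div_cancel' hdvd]) hξ _ (hh i) (hV i) t)
end

section
/- Suppose gcd(n,q)=1, r ≥ 1, δ ≥ 2, (r+δ-1) | n, and set ρ = n/(r+δ-1). Let C be a q-ary cyclic code of length n with complete defining set Z (the set of roots of its generator polynomial among the n-th roots of unity). Let ℓ_1 < ℓ_2 < ... < ℓ_{δ-1} be an arithmetic progression of δ-1 integers with common difference b, where gcd(b,n)=1. Let ξ be a primitive n-th root of unity in the splitting field of x^n - 1 over F_q, and for an integer ℓ set L_ℓ = { ξ^i : 0 ≤ i ≤ n-1, i ≡ ℓ (mod r+δ-1) }. If Z contains the union L_{ℓ_1} ∪ L_{ℓ_2} ∪ ... ∪ L_{ℓ_{δ-1}}, then C has (r,δ)-locality. -/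
open Polynomial
open scoped Classical

/-- The polynomial with coefficient vector `v`. -/
noncomputable def vecPoly {F : Type*} [Field F] {n : ℕ} (v : Fin n → F) : F[X] :=
  ∑ i : Fin n, C (v i) * X ^ (i : ℕ)

/-- The `q`-ary cyclic code of length `n` with generator polynomial `g`. -/
noncomputable def cyclicCode (F : Type*) [Field F] (n : ℕ) (g : F[X]) :
    Submodule F (Fin n → F) where
  carrier := {v | g ∣ vecPoly v}
  zero_mem' := by
    show g ∣ vecPoly (0 : Fin n → F)
    simp [vecPoly]
  add_mem' := by
    intro a b ha hb
    have h : vecPoly (a + b) = vecPoly a + vecPoly b := by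
      simp [vecPoly, add_mul, Finset.sum_add_distrib]
    show g ∣ vecPoly (a + b)
    rw [h]; exact dvd_add ha hb
  smul_mem' := by
    intro c v hv
    have h : vecPoly (c • v) = C c * vecPoly v := by
      simp [vecPoly, Finset.mul_sum, mul_assoc]
    show g ∣ vecPoly (c • v)
    rw [h]; exact Dvd.dvd.mul_left hv (C c)

/-- The code `Cset` has `(r, δ)`-locality. -/
def HasLocality {F : Type*} [Field F] {n : ℕ} (Cset : Set (Fin n → F)) (r δ : ℕ) : Prop :=
  ∀ i : Fin n, ∃ R : Finset (Fin n), i ∈ R ∧ R.card ≤ r + δ - 1 ∧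
    ∀ v ∈ Cset, (∃ j ∈ R, v j ≠ 0) → δ ≤ (R.filter (fun j => v j ≠ 0)).card

/-!
Write `s = r + δ - 1`. The coset `L_ℓ` is the root set of `X ^ ρ - ξ ^ (ρ * ℓ)`, and modulo this
polynomial a word `v` becomes `∑ c < ρ, (∑ k < s, v (c + ρ * k) * (ξ ^ ρ) ^ (ℓ * k)) * X ^ c`.
Hence `v` vanishes on `L_ℓ` exactly when each of its `ρ` subwords `k ↦ v (c + ρ * k)`, of length
`s`, vanishes at the power `(ξ ^ ρ) ^ ℓ` of the primitive `s`-th root of unity `ξ ^ ρ`. If `v` is a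
codeword, each subword thus vanishes at `δ - 1` powers of `ξ ^ ρ` with exponents in arithmetic
progression, and by the BCH bound it is zero or has weight at least `δ`.
-/

theorem lt_hammingNorm_of_sum_mul_pow_eq_zero {ι R : Type*} [Fintype ι] [CommRing R] [IsDomain R]
    {d : ℕ} {x w : ι → R} (hx : Function.Injective x) (hw : w ≠ 0)
    (h : ∀ t < d, ∑ j, w j * x j ^ t = 0) :
    d < hammingNorm w := by
  by_contra! hle
  let e := (Finset.univ.filter fun j => w j ≠ 0).equivFin.symm
  have hzero : (fun k => w (e k)) = 0 := by
    refine Matrix.eq_zero_of_forall_pow_sum_mul_pow_eq_zero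
      (hx.comp (Subtype.val_injective.comp e.injective)) fun t => ?_
    calc ∑ k, w (e k) * x (e k) ^ (t : ℕ)
        = ∑ j with w j ≠ 0, w j * x j ^ (t : ℕ) := by
          rw [e.sum_comp fun j => w j * x j ^ (t : ℕ),
            Finset.sum_coe_sort _ fun j => w j * x j ^ (t : ℕ)]
      _ = ∑ j, w j * x j ^ (t : ℕ) := Finset.sum_filter_of_ne fun j _ => left_ne_zero_of_mul
      _ = 0 := h t (t.isLt.trans_le hle)
  obtain ⟨j, hj⟩ := Function.ne_iff.mp hw
  exact hj (by simpa using congrFun hzero (e.symm ⟨j, by simpa using hj⟩))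

theorem aeval_vecPoly {F A : Type*} [Field F] [Semiring A] [Algebra F A] {n : ℕ}
    (v : Fin n → F) (x : A) :
    aeval x (vecPoly v) = ∑ i, algebraMap F A (v i) * x ^ (i : ℕ) := by
  simp [vecPoly]

theorem bch_bound {F K : Type*} [Field F] [Field K] [Algebra F K] {n d : ℕ} {ζ : K}
    (hζ : IsPrimitiveRoot ζ n) {ℓ b : ℤ} (hb : Int.gcd b n = 1) {v : Fin n → F} (hv : v ≠ 0)
    (hroots : ∀ t < d, aeval (ζ ^ (ℓ + t * b)) (vecPoly v) = 0) :
    d < hammingNorm v := by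
  obtain ⟨i, hi⟩ := Function.ne_iff.mp hv
  have hζ0 : ζ ≠ 0 := hζ.ne_zero i.pos.ne'
  let w : Fin n → K := fun j => algebraMap F K (v j) * (ζ ^ ℓ) ^ (j : ℕ)
  have hw0 (j : Fin n) : w j = 0 ↔ v j = 0 := by simp [w, hζ0, zpow_ne_zero]
  have hnodes : Function.Injective fun j : Fin n => (ζ ^ b) ^ (j : ℕ) := fun j k hjk =>
    Fin.ext ((hζ.zpow_of_gcd_eq_one b hb).pow_inj j.isLt k.isLt hjk)
  have hnorm : hammingNorm w = hammingNorm v := by simp only [hammingNorm, ne_eq, hw0]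
  rw [← hnorm]
  refine lt_hammingNorm_of_sum_mul_pow_eq_zero hnodes
    (Function.ne_iff.mpr ⟨i, (hw0 i).not.mpr hi⟩) fun t ht => ?_
  rw [← hroots t ht, aeval_vecPoly]
  refine Finset.sum_congr rfl fun j _ => ?_
  rw [zpow_add₀ hζ0, mul_comm (t : ℤ) b, zpow_mul, zpow_natCast, mul_pow, mul_assoc,
    pow_right_comm]

/-- The `c`-th polyphase component of a word of length `s * ρ`: its restriction to the positions
`c, c + ρ, …, c + (s - 1) * ρ`, as a word of length `s`. -/
def polyphase {α : Type*} {s ρ : ℕ} (v : Fin (s * ρ) → α) (c : Fin ρ) (k : Fin s) : α :=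
  v (finProdFinEquiv (k, c))

section Polyphase

variable {F : Type*} [Field F] {s ρ : ℕ}

theorem aeval_vecPoly_eq_sum_polyphase {A : Type*} [CommSemiring A] [Algebra F A]
    (v : Fin (s * ρ) → F) (x : A) :
    aeval x (vecPoly v) = ∑ c : Fin ρ, x ^ (c : ℕ) * aeval (x ^ ρ) (vecPoly (polyphase v c)) := by
  simp only [aeval_vecPoly, polyphase, Finset.mul_sum]
  rw [← finProdFinEquiv.sum_comp, Fintype.sum_prod_type_right]
  refine Finset.sum_congr rfl fun c _ => Finset.sum_congr rfl fun k _ => ?_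
  rw [finProdFinEquiv_apply_val, pow_add, pow_mul, mul_left_comm]

theorem aeval_vecPoly_polyphase_eq_zero {A : Type*} [CommRing A] [IsDomain A] [Algebra F A]
    {v : Fin (s * ρ) → F} {a : A} {x : Fin ρ → A} (hx : Function.Injective x)
    (hxa : ∀ u, x u ^ ρ = a) (hv : ∀ u, aeval (x u) (vecPoly v) = 0) (c : Fin ρ) :
    aeval a (vecPoly (polyphase v c)) = 0 := by
  have hcomponents : (fun c => aeval a (vecPoly (polyphase v c))) = 0 :=
    Matrix.eq_zero_of_forall_index_sum_pow_mul_eq_zero hx fun u => by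
      rw [← hv u, aeval_vecPoly_eq_sum_polyphase, hxa]
  exact congrFun hcomponents c

theorem aeval_zpow_vecPoly_polyphase_eq_zero {K : Type*} [Field K] [Algebra F K] [NeZero s]
    {ξ : K} (hξ : IsPrimitiveRoot ξ (s * ρ)) {v : Fin (s * ρ) → F} {e : ℤ}
    (hv : ∀ m < s * ρ, (s : ℤ) ∣ m - e → aeval (ξ ^ m) (vecPoly v) = 0) (c : Fin ρ) :
    aeval ((ξ ^ ρ) ^ e) (vecPoly (polyphase v c)) = 0 := by
  have hs : 0 < s := Nat.pos_of_neZero s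
  have hn : 0 < s * ρ := Nat.mul_pos hs c.pos
  have hζ : IsPrimitiveRoot (ξ ^ ρ) s := hξ.pow hn (mul_comm s ρ)
  obtain ⟨a, has, hae⟩ := Int.existsUnique_equiv_nat e (Int.natCast_pos.mpr hs)
  have hlt (u : Fin ρ) : a + s * u < s * ρ := by
    calc a + s * u < s + s * u := Nat.add_lt_add_right (by exact_mod_cast has) _
      _ = s * (u + 1) := by ring
      _ ≤ s * ρ := Nat.mul_le_mul_left s u.isLt
  have hpow : (ξ ^ ρ) ^ a = (ξ ^ ρ) ^ e := by
    obtain ⟨k, hk⟩ := hae.dvd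
    rw [← sub_add_cancel e a, hk, zpow_add₀ (hζ.ne_zero hs.ne'), zpow_mul, zpow_natCast,
      hζ.pow_eq_one, one_zpow, one_mul, zpow_natCast]
  refine aeval_vecPoly_polyphase_eq_zero (x := fun u => ξ ^ (a + s * (u : ℕ))) ?_ ?_ ?_ c
  · intro u u' h
    exact Fin.ext (Nat.eq_of_mul_eq_mul_left hs
      (Nat.add_left_cancel (hξ.pow_inj (hlt u) (hlt u') h)))
  · intro u
    rw [pow_right_comm, pow_add, pow_mul, hζ.pow_eq_one, one_pow, mul_one, hpow]
  · intro u
    refine hv _ (hlt u) ?_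
    rw [Nat.cast_add, Nat.cast_mul, add_sub_right_comm]
    exact hae.symm.dvd.add (dvd_mul_right _ _)

end Polyphase

theorem hasLocality_of_lt_hammingNorm_polyphase {F : Type*} [Field F] {r d ρ : ℕ}
    {S : Set (Fin ((r + d) * ρ) → F)}
    (hS : ∀ v ∈ S, ∀ c, polyphase v c ≠ 0 → d < hammingNorm (polyphase v c)) :
    HasLocality S r (d + 1) := by
  intro i
  obtain ⟨⟨k, c⟩, rfl⟩ := finProdFinEquiv.surjective i
  let position : Fin (r + d) ↪ Fin ((r + d) * ρ) :=
    ⟨fun k => finProdFinEquiv (k, c),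
      finProdFinEquiv.injective.comp (Prod.mk_left_injective c)⟩
  refine ⟨Finset.univ.map position, Finset.mem_map_of_mem position (Finset.mem_univ k),
    by simp, ?_⟩
  rintro v hv ⟨j, hj, hvj⟩
  obtain ⟨k', -, rfl⟩ := Finset.mem_map.mp hj
  rw [Finset.filter_map, Finset.card_map]
  exact hS v hv c (Function.ne_iff.mpr ⟨k', hvj⟩)

theorem locality_of_defining_set_general {F K : Type*} [Field F] [Field K] [Algebra F K]
    {n r d : ℕ} (hdvd : r + d ∣ n) {ξ : K} (hξ : IsPrimitiveRoot ξ n)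
    {ℓ b : ℤ} (hb : Int.gcd b (r + d : ℕ) = 1) {S : Set (Fin n → F)}
    (hS : ∀ v ∈ S, ∀ t < d, ∀ m < n, ((r + d : ℕ) : ℤ) ∣ m - (ℓ + t * b) →
      aeval (ξ ^ m) (vecPoly v) = 0) :
    HasLocality S r (d + 1) := by
  obtain ⟨ρ, rfl⟩ := hdvd
  refine hasLocality_of_lt_hammingNorm_polyphase fun v hv c hvc => ?_
  obtain ⟨k, -⟩ := Function.ne_iff.mp hvc
  have : NeZero (r + d) := ⟨k.pos.ne'⟩
  have hζ : IsPrimitiveRoot (ξ ^ ρ) (r + d) :=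
    hξ.pow (Nat.mul_pos k.pos c.pos) (mul_comm _ _)
  exact bch_bound hζ hb hvc fun t ht =>
    aeval_zpow_vecPoly_polyphase_eq_zero hξ (hS v hv t ht) c

/-- Proposition 1: if the complete defining set of the cyclic code `C` contains the
union of the cosets `L_{ℓ_i} = {ξ^m : 0 ≤ m ≤ n-1, m ≡ ℓ_i (mod r+δ-1)}` for an arithmetic
progression `ℓ_i = ℓ + i·b` (`i = 0, ..., δ-2`) with common difference `b`, `gcd(b,n) = 1`,
then `C` has `(r, δ)`-locality. -/
theorem locality_of_defining_set (F K : Type*) [Field F] [Fintype F] [Field K] [Algebra F K]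
    (q n r δ : ℕ) (hq : Fintype.card F = q) (hn : 0 < n) (hcop : Nat.Coprime n q)
    (hr : 1 ≤ r) (hδ : 2 ≤ δ) (hdvd : (r + δ - 1) ∣ n)
    (ρ : ℕ) (hρ : ρ = n / (r + δ - 1))
    (g : F[X]) (hg : g.Monic) (hgdvd : g ∣ X ^ n - 1)
    (ξ : K) (hξ : IsPrimitiveRoot ξ n)
    (ℓ b : ℤ) (hbpos : 0 < b) (hb : Int.gcd b n = 1)
    (hZ : ∀ i : Fin (δ - 1), ∀ m : ℕ, m < n →
      ((r + δ - 1 : ℕ) : ℤ) ∣ ((m : ℤ) - (ℓ + (i : ℕ) * b)) →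
      Polynomial.aeval (ξ ^ m) g = 0) :
    HasLocality ((cyclicCode F n g : Submodule F (Fin n → F)) : Set (Fin n → F)) r δ := by
  obtain ⟨d, rfl⟩ : ∃ d, δ = d + 1 := ⟨δ - 1, by omega⟩
  have hbs : Int.gcd b (r + d : ℕ) = 1 := Nat.Coprime.of_dvd_right hdvd hb
  exact locality_of_defining_set_general hdvd hξ hbs fun v hv t ht m hm hmt =>
    aeval_eq_zero_of_dvd_aeval_eq_zero hv (hZ ⟨t, ht⟩ m hm hmt)
end

section
/- Let q be a prime power and n a positive integer with gcd(n,q)=1. Let r ≥ 2 and δ ≥ 2 be integers such that (r+δ-1) divides gcd(n, q-1). Then there exists a q-ary cyclic code C of length n, dimension k = rn/(r+δ-1) - 1, and minimum distance d = δ+1, such that C has (r,δ)-locality and d = n - k + 1 - (⌈k/r⌉ - 1)(δ - 1) (i.e., C is an optimal (r,δ)-LRC achieving the Singleton-type bound). -/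
open Polynomial
open scoped Classical

/-- Hamming weight of a vector. -/
noncomputable def wt {F : Type*} [Field F] {n : ℕ} (v : Fin n → F) : ℕ :=
  (Finset.univ.filter (fun i => v i ≠ 0)).card

/-- The minimum distance of the code `Cset` is at least `d`. -/
def MinDistGe {F : Type*} [Field F] {n : ℕ} (Cset : Set (Fin n → F)) (d : ℕ) : Prop :=
  ∀ v ∈ Cset, v ≠ 0 → d ≤ wt v

/-- The minimum distance of the code `Cset` is exactly `d`. -/
def MinDistIs {F : Type*} [Field F] {n : ℕ} (Cset : Set (Fin n → F)) (d : ℕ) : Prop :=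
  MinDistGe Cset d ∧ ∃ v ∈ Cset, v ≠ 0 ∧ wt v = d

/-- A linear code is cyclic if it is closed under the cyclic shift
`(c_0, ..., c_{n-1}) ↦ (c_{n-1}, c_0, ..., c_{n-2})`. -/
def IsCyclic' {F : Type*} [Field F] {n : ℕ} [NeZero n] (C : Submodule F (Fin n → F)) : Prop :=
  ∀ v ∈ C, (fun i : Fin n => v (i - 1)) ∈ C

/-- Singleton-type optimality for an `[n,k,d]` `(r,δ)`-LRC:
`d = n - k + 1 - (⌈k/r⌉ - 1)(δ - 1)`. -/
def IsOptimalParams (n k d r δ : ℕ) : Prop :=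
  (d : ℤ) = (n : ℤ) - (k : ℤ) + 1 - (⌈(k : ℚ) / (r : ℚ)⌉ - 1) * ((δ : ℤ) - 1)

/-!
Write `m = r + δ - 1`, `n = m * ν`, and let `β` be a primitive `m`-th root of unity. The code is
generated by `g = (X - 1) * ∏ 1 ≤ l < δ, (X ^ ν - β ^ l)`. Arrange a word of length `n` in `m` rows
and `ν` columns, so that the columns are the residue classes of positions modulo `ν`. The word is
divisible by `X ^ ν - b` exactly when each column, read as a polynomial, vanishes at `b`. Hence
every column of a codeword has the `δ - 1` consecutive zeros `β, …, β ^ (δ - 1)`, and by the BCH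
bound it is zero or has weight at least `δ`: this is the locality. The factor `X - 1` makes the
entries of the word sum to zero. If only one column is nonzero it therefore has the further zero
`1`, and weight at least `δ + 1`; two nonzero columns already have total weight at least `δ + 1`.
The bound is attained by the word with polynomial `∏ l < δ, (X ^ ν - β ^ l)`.
-/

lemma sub_lt_hammingNorm_of_sum_mul_pow_eq_zero {R ι : Type*} [CommRing R] [IsDomain R]
    [Fintype ι] {w x : ι → R} (hx : Function.Injective x) (hx0 : ∀ i, x i ≠ 0) {s t : ℕ}
    (h : ∀ l ∈ Finset.Ico s t, ∑ i, w i * x i ^ l = 0) (hw : w ≠ 0) : t - s < hammingNorm w := by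
  by_contra! hle
  -- On the support of `w`, the vector `w i * x i ^ s` is in the kernel of a Vandermonde matrix.
  let e := (Finset.univ.filter fun i => w i ≠ 0).equivFin.symm
  have hsum (l : Fin (hammingNorm w)) :
      ∑ j, w (e j) * x (e j) ^ s * x (e j) ^ (l : ℕ) = 0 := by
    have hl : s + l ∈ Finset.Ico s t := Finset.mem_Ico.2 (by omega)
    simp_rw [mul_assoc, ← pow_add]
    rw [e.sum_comp fun i => w i * x i ^ (s + (l : ℕ)),
      Finset.sum_coe_sort _ fun i => w i * x i ^ (s + (l : ℕ)),
      Finset.sum_filter_of_ne fun i _ hi => left_ne_zero_of_mul hi]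
    exact h _ hl
  have hzero := Matrix.eq_zero_of_forall_pow_sum_mul_pow_eq_zero
    (hx.comp (Subtype.val_injective.comp e.injective)) hsum
  obtain ⟨k, hk⟩ := Function.ne_iff.1 hw
  have hkzero := congrFun hzero (e.symm ⟨k, Finset.mem_filter.2 ⟨Finset.mem_univ k, hk⟩⟩)
  rw [e.apply_symm_apply] at hkzero
  exact mul_ne_zero hk (pow_ne_zero s (hx0 k)) hkzero

section Columns

variable {m ν : ℕ}

/-- The `a`-th column of a word of length `m * ν` written row by row as an `m × ν` array, that is,
its entries in the positions congruent to `a` modulo `ν`. -/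
def column {α : Type*} (v : Fin (m * ν) → α) (a : Fin ν) : Fin m → α :=
  fun i => v (finProdFinEquiv (i, a))

/-- The repair group formed by the positions of the `a`-th column in an `m × ν` array. -/
def columnPositions (m : ℕ) (a : Fin ν) : Finset (Fin (m * ν)) :=
  Finset.univ.map ((Function.Embedding.sectL (Fin m) a).trans finProdFinEquiv.toEmbedding)

lemma card_columnPositions (m : ℕ) (a : Fin ν) : (columnPositions m a).card = m := by
  simp [columnPositions]

lemma mem_columnPositions {a : Fin ν} {j : Fin (m * ν)} :
    j ∈ columnPositions m a ↔ ∃ i : Fin m, finProdFinEquiv (i, a) = j := by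
  simp [columnPositions]

lemma exists_mem_columnPositions (j : Fin (m * ν)) : ∃ a : Fin ν, j ∈ columnPositions m a :=
  ⟨(finProdFinEquiv.symm j).2, mem_columnPositions.2
    ⟨(finProdFinEquiv.symm j).1, finProdFinEquiv.apply_symm_apply j⟩⟩

lemma column_ne_zero_iff {α : Type*} [Zero α] {v : Fin (m * ν) → α} {a : Fin ν} :
    column v a ≠ 0 ↔ ∃ j ∈ columnPositions m a, v j ≠ 0 := by
  simp [Function.ne_iff, column, mem_columnPositions]

lemma exists_column_ne_zero {α : Type*} [Zero α] {v : Fin (m * ν) → α} (hv : v ≠ 0) :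
    ∃ a, column v a ≠ 0 := by
  obtain ⟨j, hj⟩ := Function.ne_iff.1 hv
  obtain ⟨a, ha⟩ := exists_mem_columnPositions j
  exact ⟨a, column_ne_zero_iff.2 ⟨j, ha, hj⟩⟩

lemma card_filter_columnPositions {α : Type*} [Zero α] (v : Fin (m * ν) → α) (a : Fin ν) :
    ((columnPositions m a).filter fun j => v j ≠ 0).card = hammingNorm (column v a) := by
  rw [columnPositions, Finset.filter_map, Finset.card_map]
  rfl

lemma sum_eq_sum_sum_column {M : Type*} [AddCommMonoid M] (v : Fin (m * ν) → M) :
    ∑ j, v j = ∑ a, ∑ i, column v a i := by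
  rw [← finProdFinEquiv.sum_comp, Fintype.sum_prod_type_right]
  rfl

lemma wt_eq_sum_hammingNorm_column {F : Type*} [Field F] (v : Fin (m * ν) → F) :
    wt v = ∑ a, hammingNorm (column v a) := by
  simp only [wt, hammingNorm, Finset.card_filter]
  exact sum_eq_sum_sum_column fun j => if v j ≠ 0 then 1 else 0

lemma hammingNorm_column_le_wt {F : Type*} [Field F] (v : Fin (m * ν) → F) (a : Fin ν) :
    hammingNorm (column v a) ≤ wt v := by
  rw [wt_eq_sum_hammingNorm_column]
  exact Finset.single_le_sum (f := fun b => hammingNorm (column v b)) (fun _ _ => Nat.zero_le _)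
    (Finset.mem_univ a)

lemma hammingNorm_column_lt_wt {F : Type*} [Field F] {v : Fin (m * ν) → F} {a b : Fin ν}
    (hab : b ≠ a) (hb : column v b ≠ 0) : hammingNorm (column v a) < wt v := by
  rw [wt_eq_sum_hammingNorm_column]
  exact Finset.single_lt_sum (f := fun b => hammingNorm (column v b)) hab (Finset.mem_univ a)
    (Finset.mem_univ b) (hammingNorm_pos_iff.2 hb) fun _ _ _ => Nat.zero_le _

end Columns

section Polynomials

variable {R : Type*} [CommRing R]

lemma ofFn_eq_sum_C_mul_X_pow {n : ℕ} (v : Fin n → R) :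
    ofFn n v = ∑ i : Fin n, C (v i) * X ^ (i : ℕ) := by
  simp_rw [ofFn_eq_sum_monomial, C_mul_X_pow_eq_monomial]

lemma X_pow_sub_C_dvd_X_pow_add_mul_sub (ν a i : ℕ) (b : R) :
    X ^ ν - C b ∣ X ^ (a + ν * i) - C (b ^ i) * X ^ a := by
  have h : (X : R[X]) ^ (a + ν * i) - C (b ^ i) * X ^ a = X ^ a * ((X ^ ν) ^ i - C b ^ i) := by
    rw [pow_add, pow_mul, C_pow]
    ring
  exact h ▸ (sub_dvd_pow_sub_pow _ _ _).mul_left _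

lemma X_pow_sub_C_dvd_ofFn_sub {m ν : ℕ} (b : R) (v : Fin (m * ν) → R) :
    X ^ ν - C b ∣
      ofFn (m * ν) v - ofFn ν fun a => ∑ i, column v a i * b ^ (i : ℕ) := by
  have hfold : ofFn (m * ν) v - (ofFn ν fun a => ∑ i, column v a i * b ^ (i : ℕ)) =
      ∑ a : Fin ν, ∑ i : Fin m, C (column v a i) *
        (X ^ ((a : ℕ) + ν * i) - C (b ^ (i : ℕ)) * X ^ (a : ℕ)) := by
    simp_rw [ofFn_eq_sum_C_mul_X_pow, sum_eq_sum_sum_column, map_sum, Finset.sum_mul,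
      ← Finset.sum_sub_distrib, mul_sub, C_mul, mul_assoc]
    rfl
  rw [hfold]
  exact Finset.dvd_sum fun a _ => Finset.dvd_sum fun i _ =>
    (X_pow_sub_C_dvd_X_pow_add_mul_sub ν a i b).mul_left _

lemma X_pow_sub_C_dvd_ofFn_iff [Nontrivial R] {m ν : ℕ} {b : R} {v : Fin (m * ν) → R}
    (hν : 0 < ν) :
    X ^ ν - C b ∣ ofFn (m * ν) v ↔ ∀ a, ∑ i, column v a i * b ^ (i : ℕ) = 0 := by
  have hdeg (w : Fin ν → R) : (ofFn ν w).degree < (X ^ ν - C b).degree :=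
    (degree_X_pow_sub_C hν b).symm ▸ ofFn_degree_lt w
  rw [dvd_iff_dvd_of_dvd_sub (X_pow_sub_C_dvd_ofFn_sub b v),
    ← modByMonic_eq_zero_iff_dvd (monic_X_pow_sub_C b hν.ne'),
    (modByMonic_eq_self_iff (monic_X_pow_sub_C b hν.ne')).2 (hdeg _),
    map_eq_zero_iff _ (injective_ofFn ν), funext_iff]
  rfl

lemma X_sub_one_dvd_ofFn_iff {n : ℕ} {v : Fin n → R} : X - 1 ∣ ofFn n v ↔ ∑ j, v j = 0 := by
  rw [← C_1, dvd_iff_isRoot, IsRoot.def, ofFn_eq_sum_C_mul_X_pow, eval_finsetSum]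
  simp

lemma X_pow_sub_one_dvd_X_mul_ofFn_sub {n : ℕ} [NeZero n] (v : Fin n → R) :
    X ^ n - 1 ∣ X * ofFn n v - ofFn n fun i => v (i - 1) := by
  have hshift : (ofFn n fun i => v (i - 1)) =
      ∑ i : Fin n, C (v i) * X ^ (((i : ℕ) + 1) % n) := by
    rw [ofFn_eq_sum_C_mul_X_pow, ← Equiv.sum_comp (Equiv.addRight (1 : Fin n))]
    simp [Fin.val_add]
  rw [hshift, ofFn_eq_sum_C_mul_X_pow, Finset.mul_sum, ← Finset.sum_sub_distrib]
  refine Finset.dvd_sum fun i _ => ?_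
  have hmod := X_pow_sub_C_dvd_X_pow_add_mul_sub n (((i : ℕ) + 1) % n) (((i : ℕ) + 1) / n) (1 : R)
  rw [Nat.mod_add_div, one_pow, C_1, one_mul] at hmod
  rw [mul_left_comm, ← pow_succ', ← mul_sub]
  exact hmod.mul_left _

lemma ofFn_toFn_of_mem_degreeLT {n : ℕ} {p : R[X]} (hp : p ∈ degreeLT R n) :
    ofFn n (toFn n p) = p := by
  ext i
  rcases lt_or_ge i n with hi | hi
  · simp [toFn, hi]
  · rw [ofFn_coeff_eq_zero_of_ge _ hi,
      coeff_eq_zero_of_degree_lt ((mem_degreeLT.1 hp).trans_le (by exact_mod_cast hi))]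

lemma mul_mem_degreeLT_iff [IsDomain R] {n : ℕ} {g p : R[X]} (hg : g ≠ 0) :
    g * p ∈ degreeLT R n ↔ p ∈ degreeLT R (n - g.natDegree) := by
  rcases eq_or_ne p 0 with rfl | hp
  · simp
  · rw [mem_degreeLT, mem_degreeLT, degree_eq_natDegree hp,
      degree_eq_natDegree (mul_ne_zero hg hp), natDegree_mul hg hp]
    norm_cast
    omega

lemma support_expand {k : ℕ} (hk : 0 < k) (p : R[X]) :
    (expand R k p).support = p.support.image (· * k) := by
  ext j
  simp only [mem_support_iff, Finset.mem_image, coeff_expand hk, ne_eq, ite_eq_right_iff,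
    Classical.not_imp]
  constructor
  · rintro ⟨hkj, hj⟩
    exact ⟨j / k, hj, Nat.div_mul_cancel hkj⟩
  · rintro ⟨i, hi, rfl⟩
    exact ⟨dvd_mul_left k i, by rwa [Nat.mul_div_cancel _ hk]⟩

lemma wt_toFn_le_card_support {F : Type*} [Field F] (n : ℕ) (p : F[X]) :
    wt (toFn n p) ≤ p.support.card :=
  Finset.card_le_card_of_injOn Fin.val
    (fun _ hi => mem_support_iff.2 (Finset.mem_filter.1 hi).2) Fin.val_injective.injOn

end Polynomials

section PolynomialCode

variable {R : Type*} [CommRing R] {n : ℕ} {g : R[X]}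

/-- The polynomial code of length `n` generated by `g`: the words `v` for which the polynomial
`∑ i, v i * X ^ i` is a multiple of `g`. -/
noncomputable def polynomialCode (n : ℕ) (g : R[X]) : Submodule R (Fin n → R) :=
  ((Ideal.span {g}).restrictScalars R).comap (ofFn n)

lemma mem_polynomialCode {v : Fin n → R} : v ∈ polynomialCode n g ↔ g ∣ ofFn n v := by
  simp [polynomialCode, Ideal.mem_span_singleton]

lemma isCyclic'_polynomialCode {F : Type*} [Field F] {g : F[X]} [NeZero n] (hg : g ∣ X ^ n - 1) :
    IsCyclic' (polynomialCode n g) := fun v hv =>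
  mem_polynomialCode.2 <| (dvd_iff_dvd_of_dvd_sub
    (hg.trans (X_pow_sub_one_dvd_X_mul_ofFn_sub v))).1 ((mem_polynomialCode.1 hv).mul_left X)

lemma map_ofFn_polynomialCode [IsDomain R] (hg : g ≠ 0) :
    (polynomialCode n g).map (ofFn n) =
      (degreeLT R (n - g.natDegree)).map (LinearMap.mulLeft R g) := by
  ext p
  simp only [Submodule.mem_map, LinearMap.mulLeft_apply, mem_polynomialCode]
  constructor
  · rintro ⟨v, ⟨c, hc⟩, rfl⟩
    refine ⟨c, (mul_mem_degreeLT_iff hg).1 ?_, hc.symm⟩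
    exact hc ▸ mem_degreeLT.2 (ofFn_degree_lt v)
  · rintro ⟨c, hc, rfl⟩
    have h := ofFn_toFn_of_mem_degreeLT ((mul_mem_degreeLT_iff hg).2 hc)
    exact ⟨toFn n (g * c), h.symm ▸ dvd_mul_right g c, h⟩

lemma finrank_polynomialCode [IsDomain R] (hg : g ≠ 0) :
    Module.finrank R (polynomialCode n g) = n - g.natDegree := by
  rw [(Submodule.equivMapOfInjective _ (injective_ofFn n) (polynomialCode n g)).finrank_eq,
    map_ofFn_polynomialCode hg,
    ← (Submodule.equivMapOfInjective _ (mul_right_injective₀ hg : Function.Injective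
      (LinearMap.mulLeft R g)) _).finrank_eq,
    (degreeLTEquiv R _).finrank_eq, Module.finrank_fin_fun]

end PolynomialCode

section Generators

/-- The Reed–Solomon generator polynomial with zeros `1, β, …, β ^ (δ - 1)`. -/
noncomputable def rsGenerator {R : Type*} [CommRing R] (β : R) (δ : ℕ) : R[X] :=
  ∏ l ∈ Finset.range δ, (X - C (β ^ l))

/-- The generator polynomial of the locally recoverable code `lrcCode`. It is a divisor of the
Reed–Solomon generator in `X ^ ν`, whose factor `X ^ ν - 1` is weakened to `X - 1`. -/
noncomputable def lrcGenerator {R : Type*} [CommRing R] (β : R) (ν δ : ℕ) : R[X] :=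
  (X - 1) * ∏ l ∈ Finset.Ico 1 δ, (X ^ ν - C (β ^ l))

variable {R : Type*} [CommRing R] {β : R} {m ν δ : ℕ}

lemma natDegree_rsGenerator [Nontrivial R] (β : R) (δ : ℕ) : (rsGenerator β δ).natDegree = δ := by
  rw [rsGenerator, natDegree_prod_of_monic _ _ fun l _ => monic_X_sub_C (β ^ l)]
  simp only [natDegree_X_sub_C, Finset.sum_const, Finset.card_range, smul_eq_mul, mul_one]

lemma rsGenerator_ne_zero [Nontrivial R] (β : R) (δ : ℕ) : rsGenerator β δ ≠ 0 :=
  (monic_prod_of_monic _ _ fun _ _ => monic_X_sub_C _).ne_zero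

lemma rsGenerator_dvd_X_pow_sub_one [IsDomain R] (hβ : IsPrimitiveRoot β m) (hδ : δ ≤ m) :
    rsGenerator β δ ∣ X ^ m - 1 := by
  rcases Nat.eq_zero_or_pos m with rfl | hm
  · simp
  have hprod : (X ^ m - 1 : R[X]) = rsGenerator β m := by
    simpa [rsGenerator] using X_pow_sub_C_eq_prod hβ hm (one_pow m)
  rw [hprod]
  exact Finset.prod_dvd_prod_of_subset _ _ _ (Finset.range_subset_range.2 hδ)

lemma lrcGenerator_dvd_expand_rsGenerator (β : R) (ν : ℕ) (hδ : 1 ≤ δ) :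
    lrcGenerator β ν δ ∣ expand R ν (rsGenerator β δ) := by
  have hexpand : expand R ν (rsGenerator β δ) =
      (X ^ ν - 1) * ∏ l ∈ Finset.Ico 1 δ, (X ^ ν - C (β ^ l)) := by
    rw [rsGenerator, map_prod, Finset.range_eq_Ico, Finset.prod_eq_prod_Ico_succ_bot hδ]
    simp
  exact hexpand ▸ mul_dvd_mul_right (sub_one_dvd_pow_sub_one X ν) _

lemma lrcGenerator_dvd_X_pow_sub_one [IsDomain R] (hβ : IsPrimitiveRoot β m) (hδ : 1 ≤ δ)
    (hδm : δ ≤ m) : lrcGenerator β ν δ ∣ X ^ (m * ν) - 1 := by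
  have h := map_dvd (expand R ν) (rsGenerator_dvd_X_pow_sub_one hβ hδm)
  rw [map_sub, map_pow, expand_X, map_one, ← pow_mul, mul_comm] at h
  exact (lrcGenerator_dvd_expand_rsGenerator β ν hδ).trans h

lemma monic_lrcGenerator (β : R) (hν : 0 < ν) (δ : ℕ) : (lrcGenerator β ν δ).Monic :=
  (monic_X_sub_C 1).mul (monic_prod_of_monic _ _ fun _ _ => monic_X_pow_sub_C _ hν.ne')

lemma natDegree_lrcGenerator [Nontrivial R] (β : R) (hν : 0 < ν) (δ : ℕ) :
    (lrcGenerator β ν δ).natDegree = 1 + (δ - 1) * ν := by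
  have hprod := fun (l : ℕ) (_ : l ∈ Finset.Ico 1 δ) => monic_X_pow_sub_C (β ^ l) hν.ne'
  rw [lrcGenerator, ← C_1, (monic_X_sub_C 1).natDegree_mul (monic_prod_of_monic _ _ hprod),
    natDegree_prod_of_monic _ _ hprod, natDegree_X_sub_C]
  simp only [natDegree_X_pow_sub_C, Finset.sum_const, Nat.card_Ico, smul_eq_mul]

end Generators

section LRCCode

variable {F : Type*} [Field F] {β : F} {m ν δ : ℕ} {v : Fin (m * ν) → F}

/-- The cyclic code of length `m * ν` generated by `lrcGenerator β ν δ`, whose repair groups are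
the residue classes of positions modulo `ν`; of interest for `β` a primitive `m`-th root of
unity. -/
noncomputable def lrcCode (β : F) (m ν δ : ℕ) : Submodule F (Fin (m * ν) → F) :=
  polynomialCode (m * ν) (lrcGenerator β ν δ)

lemma finrank_lrcCode (β : F) (m : ℕ) (hν : 0 < ν) (δ : ℕ) :
    Module.finrank F (lrcCode β m ν δ) = m * ν - (1 + (δ - 1) * ν) := by
  rw [lrcCode, finrank_polynomialCode (monic_lrcGenerator β hν δ).ne_zero,
    natDegree_lrcGenerator β hν]

lemma isCyclic'_lrcCode [NeZero (m * ν)] (hβ : IsPrimitiveRoot β m) (hδ : 1 ≤ δ) (hδm : δ ≤ m) :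
    IsCyclic' (lrcCode β m ν δ) :=
  isCyclic'_polynomialCode (lrcGenerator_dvd_X_pow_sub_one hβ hδ hδm)

lemma sum_eq_zero_of_mem_lrcCode (hv : v ∈ lrcCode β m ν δ) : ∑ j, v j = 0 :=
  X_sub_one_dvd_ofFn_iff.1 ((dvd_mul_right _ _).trans (mem_polynomialCode.1 hv))

lemma sum_column_mul_pow_eq_zero (hv : v ∈ lrcCode β m ν δ) (a : Fin ν) {l : ℕ}
    (hl : l ∈ Finset.Ico 1 δ) : ∑ i : Fin m, column v a i * (β ^ (i : ℕ)) ^ l = 0 := by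
  have hdvd : X ^ ν - C (β ^ l) ∣ ofFn (m * ν) v :=
    ((Finset.dvd_prod_of_mem _ hl).mul_left _).trans (mem_polynomialCode.1 hv)
  simpa only [pow_right_comm β l] using (X_pow_sub_C_dvd_ofFn_iff a.pos).1 hdvd a

lemma sub_lt_hammingNorm_of_isPrimitiveRoot {w : Fin m → F} (hβ : IsPrimitiveRoot β m) {s t : ℕ}
    (h : ∀ l ∈ Finset.Ico s t, ∑ i : Fin m, w i * (β ^ (i : ℕ)) ^ l = 0) (hw : w ≠ 0) :
    t - s < hammingNorm w :=
  sub_lt_hammingNorm_of_sum_mul_pow_eq_zero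
    (fun i j hij => Fin.ext (hβ.pow_inj i.2 j.2 hij))
    (fun i => pow_ne_zero _ (hβ.ne_zero i.pos.ne')) h hw

lemma le_hammingNorm_column (hβ : IsPrimitiveRoot β m) (hv : v ∈ lrcCode β m ν δ) {a : Fin ν}
    (ha : column v a ≠ 0) : δ ≤ hammingNorm (column v a) := by
  have := sub_lt_hammingNorm_of_isPrimitiveRoot hβ
    (fun _ hl => sum_column_mul_pow_eq_zero hv a hl) ha
  omega

lemma lt_hammingNorm_column_of_unique (hβ : IsPrimitiveRoot β m) (hv : v ∈ lrcCode β m ν δ)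
    {a : Fin ν} (ha : column v a ≠ 0) (huniq : ∀ b, b ≠ a → column v b = 0) :
    δ < hammingNorm (column v a) := by
  have hsum : ∑ i, column v a i = 0 := by
    rw [← sum_eq_zero_of_mem_lrcCode hv, sum_eq_sum_sum_column,
      Fintype.sum_eq_single a fun b hb => by simp [huniq b hb]]
  refine sub_lt_hammingNorm_of_isPrimitiveRoot (s := 0) hβ (fun l hl => ?_) ha
  rcases Nat.eq_zero_or_pos l with rfl | hl0
  · simpa using hsum
  · exact sum_column_mul_pow_eq_zero hv a (Finset.mem_Ico.2 ⟨hl0, (Finset.mem_Ico.1 hl).2⟩)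

lemma minDistGe_lrcCode (hβ : IsPrimitiveRoot β m) :
    MinDistGe (lrcCode β m ν δ : Set (Fin (m * ν) → F)) (δ + 1) := by
  intro v hv hv0
  obtain ⟨a, ha⟩ := exists_column_ne_zero hv0
  by_cases huniq : ∀ b, b ≠ a → column v b = 0
  · exact (lt_hammingNorm_column_of_unique hβ hv ha huniq).trans_le (hammingNorm_column_le_wt v a)
  · push Not at huniq
    obtain ⟨b, hba, hb⟩ := huniq
    exact (le_hammingNorm_column hβ hv ha).trans_lt (hammingNorm_column_lt_wt hba hb)

lemma exists_mem_lrcCode_wt_le (β : F) (hν : 0 < ν) (hδ : 1 ≤ δ) (hδm : δ < m) :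
    ∃ v ∈ lrcCode β m ν δ, v ≠ 0 ∧ wt v ≤ δ + 1 := by
  set p := expand F ν (rsGenerator β δ) with hp
  have hp0 : p ≠ 0 := (expand_ne_zero hν).2 (rsGenerator_ne_zero β δ)
  have hdeg : p.natDegree < m * ν := by
    rw [hp, natDegree_expand, natDegree_rsGenerator]
    exact Nat.mul_lt_mul_of_pos_right hδm hν
  have hofFn : ofFn (m * ν) (toFn (m * ν) p) = p := ofFn_comp_toFn_eq_id_of_natDegree_lt hdeg
  refine ⟨toFn (m * ν) p, mem_polynomialCode.2 ?_, fun h => hp0 ?_, ?_⟩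
  · exact hofFn.symm ▸ lrcGenerator_dvd_expand_rsGenerator β ν hδ
  · rw [← hofFn, h, map_zero]
  · calc wt (toFn (m * ν) p) ≤ p.support.card := wt_toFn_le_card_support _ p
      _ ≤ (rsGenerator β δ).support.card := by
        rw [hp, support_expand hν]
        exact Finset.card_image_le
      _ ≤ (rsGenerator β δ).natDegree + 1 := card_supp_le_succ_natDegree _
      _ = δ + 1 := by rw [natDegree_rsGenerator]

lemma minDistIs_lrcCode (hβ : IsPrimitiveRoot β m) (hν : 0 < ν) (hδ : 1 ≤ δ) (hδm : δ < m) :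
    MinDistIs (lrcCode β m ν δ : Set (Fin (m * ν) → F)) (δ + 1) := by
  obtain ⟨v, hv, hv0, hwt⟩ := exists_mem_lrcCode_wt_le β hν hδ hδm
  exact ⟨minDistGe_lrcCode hβ, v, hv, hv0, hwt.antisymm (minDistGe_lrcCode hβ v hv hv0)⟩

lemma hasLocality_lrcCode {r : ℕ} (hβ : IsPrimitiveRoot β m) (hm : m ≤ r + δ - 1) :
    HasLocality (lrcCode β m ν δ : Set (Fin (m * ν) → F)) r δ := by
  intro j
  obtain ⟨a, ha⟩ := exists_mem_columnPositions j
  refine ⟨columnPositions m a, ha, (card_columnPositions m a).trans_le hm, fun v hv hne => ?_⟩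
  rw [card_filter_columnPositions]
  exact le_hammingNorm_column hβ hv (column_ne_zero_iff.2 hne)

end LRCCode

lemma ceil_mul_sub_one_div {r ν : ℕ} (hr : 2 ≤ r) (hν : 0 < ν) :
    ⌈((r * ν - 1 : ℕ) : ℚ) / (r : ℚ)⌉ = ν := by
  have hr' : (2 : ℚ) ≤ r := by exact_mod_cast hr
  rw [Int.ceil_eq_iff, lt_div_iff₀ (by linarith), div_le_iff₀ (by linarith),
    Nat.cast_pred (Nat.mul_pos (by omega) hν)]
  push_cast
  constructor <;> linarith

lemma isOptimalParams_dist_delta_add_one {ν r δ : ℕ} (hν : 0 < ν) (hr : 2 ≤ r) (hδ : 1 ≤ δ) :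
    IsOptimalParams ((r + δ - 1) * ν) (r * ν - 1) (δ + 1) r δ := by
  rw [IsOptimalParams, ceil_mul_sub_one_div hr hν, Nat.cast_pred (Nat.mul_pos (by omega) hν),
    Nat.add_sub_assoc hδ]
  push_cast [Nat.cast_sub hδ]
  ring

lemma exists_isPrimitiveRoot_of_dvd_card_sub_one {F : Type*} [Field F] [Fintype F] {m : ℕ}
    (h : m ∣ Fintype.card F - 1) : ∃ β : F, IsPrimitiveRoot β m := by
  obtain ⟨g, hg⟩ := IsCyclic.exists_ofOrder_eq_natCard (α := Fˣ)
  rw [Nat.card_eq_fintype_card, Fintype.card_units] at hg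
  obtain ⟨k, hk⟩ := h
  have hgk : orderOf g = k * m := by rw [hg, hk, mul_comm]
  exact ⟨_, ((IsPrimitiveRoot.orderOf g).pow (orderOf_pos g) hgk).map_of_injective
    (f := Units.coeHom F) Units.val_injective⟩

theorem exists_optimal_cyclic_LRC_dist_delta_add_one_general {F : Type*} [Field F] {β : F}
    {n r δ : ℕ} [NeZero n] (hβ : IsPrimitiveRoot β (r + δ - 1)) (hr : 2 ≤ r) (hδ : 1 ≤ δ)
    (hdvd : r + δ - 1 ∣ n) :
    ∃ C : Submodule F (Fin n → F),
      IsCyclic' C ∧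
      Module.finrank F C = r * n / (r + δ - 1) - 1 ∧
      MinDistIs (C : Set (Fin n → F)) (δ + 1) ∧
      HasLocality (C : Set (Fin n → F)) r δ ∧
      IsOptimalParams n (r * n / (r + δ - 1) - 1) (δ + 1) r δ := by
  obtain ⟨ν, rfl⟩ := hdvd
  have hν : 0 < ν := Nat.pos_of_ne_zero (right_ne_zero_of_mul (NeZero.ne ((r + δ - 1) * ν)))
  have hdim : r * ((r + δ - 1) * ν) / (r + δ - 1) = r * ν := by
    rw [mul_left_comm, Nat.mul_div_cancel_left _ (by omega)]
  have hfinrank : (r + δ - 1) * ν - (1 + (δ - 1) * ν) = r * ν - 1 := by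
    rw [Nat.add_sub_assoc hδ, add_mul]
    omega
  rw [hdim]
  exact ⟨lrcCode β (r + δ - 1) ν δ,
    isCyclic'_lrcCode hβ hδ (by omega),
    (finrank_lrcCode β _ hν δ).trans hfinrank,
    minDistIs_lrcCode hβ hν hδ (by omega),
    hasLocality_lrcCode hβ le_rfl,
    isOptimalParams_dist_delta_add_one hν hr hδ⟩

/-- **Theorem 1 / main result (i).** If `gcd(n,q) = 1` and `r, δ ≥ 2` with
`(r+δ-1) ∣ gcd(n, q-1)`, then there exists a `q`-ary optimal cyclic `(r,δ)`-LRC of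
length `n`, dimension `k = rn/(r+δ-1) - 1` and minimum distance `δ + 1`, achieving the
Singleton-type bound `d = n - k + 1 - (⌈k/r⌉ - 1)(δ-1)`. -/
theorem exists_optimal_cyclic_LRC_dist_delta_add_one (F : Type*) [Field F] [Fintype F]
    (q n r δ : ℕ) (hq : Fintype.card F = q) [NeZero n] (hcop : Nat.Coprime n q)
    (hr : 2 ≤ r) (hδ : 2 ≤ δ) (hdvd : (r + δ - 1) ∣ Nat.gcd n (q - 1)) :
    ∃ C : Submodule F (Fin n → F),
      IsCyclic' C ∧
      Module.finrank F C = r * n / (r + δ - 1) - 1 ∧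
      MinDistIs (C : Set (Fin n → F)) (δ + 1) ∧
      HasLocality (C : Set (Fin n → F)) r δ ∧
      IsOptimalParams n (r * n / (r + δ - 1) - 1) (δ + 1) r δ := by
  subst hq
  obtain ⟨β, hβ⟩ :=
    exists_isPrimitiveRoot_of_dvd_card_sub_one (hdvd.trans (Nat.gcd_dvd_right _ _))
  exact exists_optimal_cyclic_LRC_dist_delta_add_one_general hβ hr (by omega)
    (hdvd.trans (Nat.gcd_dvd_left _ _))
end

section
/- Let q be a prime power and n an odd positive integer with gcd(n,q)=1. Let r ≥ 4 be an integer such that (r+2) divides gcd(n, q+1) and gcd(n/(r+2), r+2) = 1. Then there exists a q-ary cyclic code C of length n, dimension k = rn/(r+2) - 3, and minimum distance d = 6, such that C has (r,3)-locality and d = n - k + 1 - 2(⌈k/r⌉ - 1) (i.e., C is an optimal (r,3)-LRC achieving the Singleton-type bound). -/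
open Polynomial
open scoped Classical

/-!
Put `m = n / (r + 2)` and cut a word of length `n` into `m` blocks according to the residue of the
coordinate modulo `m`. Since `r + 2` divides `q + 1`, the field with `q ^ 2` elements contains a
primitive `(r + 2)`-th root of unity `β`, and the Frobenius map inverts it. Consider the words all
of whose blocks vanish at `β`, and which vanish as a whole at `1` and at `β ^ 2`; these are
`2 * m + 3` linear conditions over `F`. By conjugation every block also vanishes at `β⁻¹`, so a
nonzero block has weight at least `3` by the BCH bound. A nonzero word therefore has weight at
least `6` if it meets two blocks; if it is supported on a single block, it vanishes at
`β ^ (-2), ..., β ^ 2`, and the BCH bound gives `6` again. The Singleton-type bound now leaves no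
room: neither the dimension nor the minimum distance can exceed these estimates.
-/

section SingletonBound

open Finset

variable {F ι : Type*} [Field F] {V : Submodule F (ι → F)} {S T : Finset ι}

/-- The shortening of the code `V` at the coordinates in `T`, that is, its subcode of words
vanishing on `T`. Words keep their full length, so that all shortenings of `V` are subcodes
of `V`. -/
def shortening (V : Submodule F (ι → F)) (T : Finset ι) : Submodule F (ι → F) :=
  V ⊓ LinearMap.ker (LinearMap.funLeft F F (Subtype.val : T → ι))

theorem mem_shortening {v : ι → F} : v ∈ shortening V T ↔ v ∈ V ∧ ∀ i ∈ T, v i = 0 := by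
  simp [shortening, funext_iff, LinearMap.funLeft_apply]

theorem finrank_le_finrank_shortening_add_card [Finite ι] :
    Module.finrank F V ≤ Module.finrank F (shortening V T) + #T := by
  let restrict : V →ₗ[F] (T → F) := (LinearMap.funLeft F F Subtype.val).comp V.subtype
  have hker : shortening V T = (LinearMap.ker restrict).map V.subtype := by
    rw [shortening, LinearMap.ker_comp, Submodule.map_comap_subtype]
  have hrange := (LinearMap.range restrict).finrank_le
  rw [Module.finrank_fintype_fun_eq_card, Fintype.card_coe] at hrange
  rw [hker, Submodule.finrank_map_subtype_eq, ← restrict.finrank_range_add_finrank_ker]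
  omega

theorem finrank_add_pred_le_finrank_shortening_add_card [Finite ι] {d : ℕ}
    (hd : ∀ v ∈ V, (∃ i ∈ T, v i ≠ 0) → d ≤ #{i ∈ T | v i ≠ 0})
    (hV : ∃ v ∈ V, ∃ i ∈ T, v i ≠ 0) :
    Module.finrank F V + (d - 1) ≤ Module.finrank F (shortening V T) + #T := by
  have hdT : d ≤ #T := by
    obtain ⟨v, hv, hvT⟩ := hV
    exact (hd v hv hvT).trans (card_filter_le _ _)
  obtain ⟨S, hST, hS⟩ := exists_subset_card_eq (Nat.sub_le #T (d - 1))
  -- A word vanishing on all but `d - 1` coordinates of `T` is too light not to vanish on `T`.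
  have hle : shortening V S ≤ shortening V T := by
    intro v hv
    obtain ⟨hvV, hvS⟩ := mem_shortening.1 hv
    refine mem_shortening.2 ⟨hvV, fun i hi => by_contra fun hvi => ?_⟩
    have hsupp : #{i ∈ T | v i ≠ 0} ≤ #(T \ S) := card_le_card fun j hj =>
      mem_sdiff.2 ⟨(mem_filter.1 hj).1, fun hjS => (mem_filter.1 hj).2 (hvS j hjS)⟩
    have hpos : 0 < #{i ∈ T | v i ≠ 0} := card_pos.2 ⟨i, mem_filter.2 ⟨hi, hvi⟩⟩
    have := hd v hvV ⟨i, hi, hvi⟩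
    rw [card_sdiff_of_subset hST] at hsupp
    omega
  have hfinrank := Submodule.finrank_mono hle
  have := finrank_le_finrank_shortening_add_card (V := V) (T := S)
  omega

variable {n r δ d l : ℕ} {C : Submodule F (Fin n → F)}

theorem HasLocality.exists_finrank_shortening_add_le
    (hC : HasLocality (C : Set (Fin n → F)) r δ) {S : Finset (Fin n)} (hS : shortening C S ≠ ⊥) :
    ∃ T : Finset (Fin n),
      Module.finrank F (shortening C S) ≤ Module.finrank F (shortening C T) + r ∧
      Module.finrank F (shortening C S) + #S + (δ - 1) ≤
        Module.finrank F (shortening C T) + #T := by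
  obtain ⟨v, hv, hv0⟩ := Submodule.exists_mem_ne_zero_of_ne_bot hS
  obtain ⟨i, hvi⟩ := Function.ne_iff.1 hv0
  have hiS : i ∉ S := fun hi => hvi ((mem_shortening.1 hv).2 i hi)
  obtain ⟨R, hiR, hR, hδ⟩ := hC i
  have hsingleton : Module.finrank F (shortening C S) + (δ - 1) ≤
      Module.finrank F (shortening (shortening C S) (R \ S)) + #(R \ S) := by
    refine finrank_add_pred_le_finrank_shortening_add_card (fun w hw ⟨j, hj, hwj⟩ => ?_)
      ⟨v, hv, i, mem_sdiff.2 ⟨hiR, hiS⟩, hvi⟩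
    obtain ⟨hwC, hwS⟩ := mem_shortening.1 hw
    refine (hδ w hwC ⟨j, (mem_sdiff.1 hj).1, hwj⟩).trans (card_le_card fun k hk => ?_)
    obtain ⟨hkR, hwk⟩ := mem_filter.1 hk
    exact mem_filter.2 ⟨mem_sdiff.2 ⟨hkR, fun hkS => hwk (hwS k hkS)⟩, hwk⟩
  have hunion : shortening (shortening C S) (R \ S) ≤ shortening C (S ∪ R) := by
    intro w hw
    simp only [mem_shortening, mem_sdiff, mem_union] at hw ⊢
    grind
  have hfinrank := Submodule.finrank_mono hunion
  have hcard_sdiff : #(R \ S) ≤ #R := card_le_card sdiff_subset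
  have hcard_pos : 0 < #R := card_pos.2 ⟨i, hiR⟩
  have hcard_union : #(S ∪ R) = #S + #(R \ S) := by
    rw [← union_sdiff_self_eq_union, card_union_of_disjoint disjoint_sdiff]
  exact ⟨S ∪ R, by omega, by omega⟩

theorem HasLocality.exists_finrank_add_le_finrank_shortening_add_card
    (hC : HasLocality (C : Set (Fin n → F)) r δ) (hl : l * r < Module.finrank F C) :
    ∃ S : Finset (Fin n), Module.finrank F C ≤ Module.finrank F (shortening C S) + l * r ∧
      Module.finrank F C + l * (δ - 1) ≤ Module.finrank F (shortening C S) + #S := by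
  induction l with
  | zero =>
    have := finrank_le_finrank_shortening_add_card (V := C) (T := ∅)
    exact ⟨∅, by simpa using this, by simpa using this⟩
  | succ l ih =>
    rw [Nat.succ_mul] at hl
    obtain ⟨S, hdim, hcard⟩ := ih (by omega)
    have hS : shortening C S ≠ ⊥ := Submodule.one_le_finrank_iff.1 (by omega)
    obtain ⟨T, hdim_step, hcard_step⟩ := hC.exists_finrank_shortening_add_le hS
    refine ⟨T, ?_, ?_⟩ <;> rw [Nat.succ_mul] <;> omega

/-- The Singleton-type bound for `(r, δ)`-LRCs; the largest admissible `l` is `⌈k / r⌉ - 1`. -/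
theorem HasLocality.add_finrank_add_le (hC : HasLocality (C : Set (Fin n → F)) r δ)
    (hd : MinDistGe (C : Set (Fin n → F)) d) (hl : l * r < Module.finrank F C) :
    d + Module.finrank F C + l * (δ - 1) ≤ n + 1 := by
  obtain ⟨S, hdim, hcard⟩ := hC.exists_finrank_add_le_finrank_shortening_add_card hl
  obtain ⟨v, hv, hv0⟩ := Submodule.exists_mem_ne_zero_of_ne_bot
    (Submodule.one_le_finrank_iff.1 (by omega : 1 ≤ Module.finrank F (shortening C S)))
  have hsupp {w : Fin n → F} (hw : w ∈ shortening C S) (i : Fin n) (hi : w i ≠ 0) : i ∈ Sᶜ :=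
    mem_compl.2 fun hiS => hi ((mem_shortening.1 hw).2 i hiS)
  have hsingleton := finrank_add_pred_le_finrank_shortening_add_card (V := shortening C S)
    (T := Sᶜ) (d := d) (fun w hw ⟨i, _, hwi⟩ => ?_) ?_
  · have hbot : shortening (shortening C S) Sᶜ = ⊥ := by
      refine (Submodule.eq_bot_iff _).2 fun w hw => funext fun i => by_contra fun hi => hi ?_
      exact (mem_shortening.1 hw).2 i (hsupp (mem_shortening.1 hw).1 i hi)
    rw [hbot, finrank_bot, card_compl, Fintype.card_fin] at hsingleton
    have := card_finset_fin_le S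
    omega
  · refine (hd w (mem_shortening.1 hw).1 fun h => hwi (congrFun h i)).trans (card_le_card ?_)
    exact fun j hj => mem_filter.2 ⟨hsupp hw j (mem_filter.1 hj).2, (mem_filter.1 hj).2⟩
  · obtain ⟨i, hi⟩ := Function.ne_iff.1 hv0
    exact ⟨v, hv, i, hsupp hv i hi, hi⟩

theorem minDistIs_of_not_minDistGe_succ {D : Set (Fin n → F)} (hd : MinDistGe D d)
    (hd' : ¬MinDistGe D (d + 1)) : MinDistIs D d := by
  simp only [MinDistGe, not_forall, not_le] at hd'
  obtain ⟨v, hv, hv0, hwt⟩ := hd'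
  exact ⟨hd, v, hv, hv0, le_antisymm (Nat.le_of_lt_succ hwt) (hd v hv hv0)⟩

variable {k : ℕ}

theorem HasLocality.finrank_eq (hC : HasLocality (C : Set (Fin n → F)) r δ)
    (hd : MinDistGe (C : Set (Fin n → F)) d) (hl : l * r < k) (hk : k ≤ Module.finrank F C)
    (hn : d + k + l * (δ - 1) = n + 1) : Module.finrank F C = k := by
  have := hC.add_finrank_add_le hd (hl.trans_le hk)
  omega

theorem HasLocality.minDistIs (hC : HasLocality (C : Set (Fin n → F)) r δ)
    (hd : MinDistGe (C : Set (Fin n → F)) d) (hl : l * r < k) (hk : k ≤ Module.finrank F C)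
    (hn : d + k + l * (δ - 1) = n + 1) : MinDistIs (C : Set (Fin n → F)) d := by
  refine minDistIs_of_not_minDistGe_succ hd fun hd' => ?_
  have := hC.add_finrank_add_le hd' (hl.trans_le hk)
  omega

theorem isOptimalParams_iff (hl : l * r < k) (hk : k ≤ (l + 1) * r) (hδ : 1 ≤ δ) :
    IsOptimalParams n k d r δ ↔ d + k + l * (δ - 1) = n + 1 := by
  have hr : (0 : ℚ) < r := by
    exact_mod_cast Nat.pos_of_ne_zero (by rintro rfl; omega)
  have hceil : ⌈(k : ℚ) / r⌉ = l + 1 := by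
    rw [Int.ceil_eq_iff, lt_div_iff₀ hr, div_le_iff₀ hr]
    push_cast
    rw [add_sub_cancel_right]
    exact ⟨by exact_mod_cast hl, by exact_mod_cast hk⟩
  rw [IsOptimalParams, hceil, ← Nat.cast_inj (R := ℤ)]
  push_cast [Nat.cast_sub hδ]
  constructor <;> intro h <;> linarith

end SingletonBound

open Finset in
theorem eq_zero_of_forall_sum_mul_pow_eq_zero {R ι : Type*} [CommRing R] [IsDomain R]
    {S : Finset ι} {c x : ι → R} (hx : Set.InjOn x S)
    (h : ∀ j < #S, ∑ i ∈ S, c i * x i ^ j = 0) : ∀ i ∈ S, c i = 0 := by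
  have hzero : (fun k => c (S.equivFin.symm k)) = 0 := by
    refine Matrix.eq_zero_of_forall_pow_sum_mul_pow_eq_zero
      (f := fun k => x (S.equivFin.symm k)) (hx.injective.comp S.equivFin.symm.injective)
      fun j => ?_
    rw [S.equivFin.symm.sum_comp fun i : S => c i * x i ^ (j : ℕ),
      S.sum_coe_sort fun i => c i * x i ^ (j : ℕ)]
    exact h j j.2
  intro i hi
  simpa using congrFun hzero (S.equivFin ⟨i, hi⟩)

theorem exists_field_extension_isPrimitiveRoot (F : Type*) [Field F] [Fintype F] {e ρ : ℕ}
    [NeZero e] (hρ : ρ ∣ Fintype.card F ^ e - 1) :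
    ∃ (K : Type) (_ : Field K) (_ : Algebra F K) (β : K),
      Module.finrank F K = e ∧ IsPrimitiveRoot β ρ := by
  obtain ⟨p, hp⟩ := CharP.exists F
  have : Fact p.Prime := ⟨CharP.char_is_prime F p⟩
  let K := FiniteField.Extension F p e
  obtain ⟨g, hg⟩ := IsCyclic.exists_ofOrder_eq_natCard (α := Kˣ)
  have hcard : Nat.card Kˣ = Fintype.card F ^ e - 1 := by
    rw [Nat.card_units, FiniteField.natCard_extension, Nat.card_eq_fintype_card]
  obtain ⟨t, ht⟩ : ρ ∣ Nat.card Kˣ := hcard ▸ hρ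
  have hroot : IsPrimitiveRoot g (Nat.card Kˣ) := hg ▸ IsPrimitiveRoot.orderOf g
  exact ⟨K, inferInstance, inferInstance, (g ^ t : Kˣ), FiniteField.finrank_extension F p e,
    IsPrimitiveRoot.coe_units_iff.2 (hroot.pow Nat.card_pos (by rw [ht, mul_comm]))⟩

namespace CyclicLRC

open Finset

variable {F K : Type*} [Field F] [Field K] [Algebra F K] {n m ρ : ℕ}
variable {S T : Finset (Fin n)} {v : Fin n → F} {x y β : K}

/-- The value at `x` of the part supported on `S` of the polynomial `∑ i, v i * X ^ i` that
represents the word `v`. -/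
noncomputable def evalOn (S : Finset (Fin n)) (x : K) : (Fin n → F) →ₗ[F] K :=
  ∑ i ∈ S, (LinearMap.proj i).smulRight (x ^ (i : ℕ))

theorem evalOn_apply : evalOn S x v = ∑ i ∈ S, v i • x ^ (i : ℕ) := by
  simp [evalOn]

theorem evalOn_algebraMap (a : F) :
    evalOn S (algebraMap F K a) v = algebraMap F K (evalOn S a v) := by
  simp [evalOn_apply, Algebra.smul_def]

theorem evalOn_eq_of_subset (hST : S ⊆ T) (hv : ∀ i ∈ T, v i ≠ 0 → i ∈ S) :
    evalOn S x v = evalOn T x v := by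
  rw [evalOn_apply, evalOn_apply]
  refine sum_subset hST fun i hiT hiS => ?_
  rw [not_not.1 (mt (hv i hiT) hiS), zero_smul]

theorem evalOn_inv_eq_zero [Fintype F] (hx : x ^ (Fintype.card F + 1) = 1)
    (h : evalOn S x v = 0) : evalOn S x⁻¹ v = 0 := by
  have hfrob : x ^ Fintype.card F = x⁻¹ := eq_inv_of_mul_eq_one_left (by rw [← pow_succ, hx])
  rw [evalOn_apply] at h ⊢
  have := congrArg (FiniteField.frobeniusAlgHom F K) h
  simp only [map_sum, map_smul, map_zero, FiniteField.coe_frobeniusAlgHom] at this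
  simpa only [pow_right_comm x _ (Fintype.card F), hfrob] using this

theorem lt_card_support_of_evalOn_eq_zero {e : ℕ} (hy : y ≠ 0)
    (hx : Set.InjOn (fun i : Fin n => x ^ (i : ℕ)) T)
    (h : ∀ j < e, evalOn T (y * x ^ j) v = 0) (hv : ∃ i ∈ T, v i ≠ 0) :
    e < #{i ∈ T | v i ≠ 0} := by
  by_contra! hle
  obtain ⟨i, hi, hvi⟩ := hv
  have hzero := eq_zero_of_forall_sum_mul_pow_eq_zero (S := {i ∈ T | v i ≠ 0})
    (c := fun i => v i • y ^ (i : ℕ)) (hx.mono (coe_subset.2 (filter_subset _ T))) fun j hj => ?_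
  · have := hzero i (mem_filter.2 ⟨hi, hvi⟩)
    simp_all
  · rw [← h j (hj.trans_le hle), ← evalOn_eq_of_subset (filter_subset (v · ≠ 0) T)
      fun i hi hvi => mem_filter.2 ⟨hi, hvi⟩, evalOn_apply]
    refine sum_congr rfl fun i _ => ?_
    rw [smul_mul_assoc, mul_pow, pow_right_comm x]

theorem val_add_one_modEq [NeZero n] (i : Fin n) : ((i + 1 : Fin n) : ℕ) ≡ i + 1 [MOD n] := by
  rw [Fin.val_add, Fin.val_one', Nat.add_mod_mod]
  exact Nat.mod_modEq _ _

theorem evalOn_shift [NeZero n] (hx : x ^ n = 1) (hST : ∀ i, i ∈ S ↔ i + 1 ∈ T) :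
    evalOn T x (fun i => v (i - 1)) = x * evalOn S x v := by
  rw [evalOn_apply, evalOn_apply, mul_sum]
  refine (sum_equiv (Equiv.addRight 1) hST fun i _ => ?_).symm
  have hpow : x ^ ((i + 1 : Fin n) : ℕ) = x ^ ((i : ℕ) + 1) :=
    pow_eq_pow_of_modEq (val_add_one_modEq i) hx
  rw [Equiv.coe_addRight, add_sub_cancel_right, hpow, pow_succ', mul_smul_comm]

/-- The block of `s`: the coordinates congruent to `s` modulo `m`. The blocks are the repair sets
of the code constructed below. -/
def block (n : ℕ) {m : ℕ} (s : ZMod m) : Finset (Fin n) :=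
  {i | ((i : ℕ) : ZMod m) = s}

theorem mem_block {s : ZMod m} {i : Fin n} : i ∈ block n s ↔ ((i : ℕ) : ZMod m) = s := by
  simp [block]

theorem mem_block_sub_one_iff [NeZero n] (hm : m ∣ n) {s : ZMod m} {i : Fin n} :
    i ∈ block n (s - 1) ↔ i + 1 ∈ block n s := by
  have hcast := (ZMod.natCast_eq_natCast_iff _ _ _).2 ((val_add_one_modEq i).of_dvd hm)
  rw [mem_block, mem_block, hcast, Nat.cast_succ, eq_sub_iff_add_eq]

theorem pow_injOn_block (hn : n ≤ m * ρ) (hco : m.Coprime ρ) (hx : IsPrimitiveRoot x ρ)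
    (s : ZMod m) : Set.InjOn (fun i : Fin n => x ^ (i : ℕ)) (block n s) := by
  intro i hi j hj hij
  rw [mem_coe, mem_block] at hi hj
  have hρ : ρ ≠ 0 := by
    rintro rfl
    exact absurd i.2 (by omega)
  have hmod_m : (i : ℕ) ≡ j [MOD m] := (ZMod.natCast_eq_natCast_iff _ _ _).1 (hi.trans hj.symm)
  have hmod_ρ : (i : ℕ) ≡ j [MOD ρ] :=
    hx.eq_orderOf ▸ (hx.isOfFinOrder hρ).pow_eq_pow_iff_modEq.1 hij
  exact Fin.ext (((Nat.modEq_and_modEq_iff_modEq_mul hco).1 ⟨hmod_m, hmod_ρ⟩).eq_of_lt_of_lt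
    (i.2.trans_le hn) (j.2.trans_le hn))

theorem card_le_of_pow_injOn (hρ : 0 < ρ) (hx : x ^ ρ = 1)
    (hinj : Set.InjOn (fun i : Fin n => x ^ (i : ℕ)) S) : #S ≤ ρ := by
  have hmaps : ∀ i ∈ S, x ^ (i : ℕ) ∈ nthRootsFinset ρ (1 : K) := fun i _ => by
    rw [mem_nthRootsFinset hρ, pow_right_comm, hx, one_pow]
  exact (card_le_card_of_injOn _ hmaps hinj).trans
    ((Multiset.toFinset_card_le _).trans (card_nthRoots ρ 1))

/-- The parity checks of `code`: the value at `β` on each block, and the values at `1` and `β ^ 2`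
of the whole word. The value at `1` is taken in `F`, so that it counts as a single check over
`F`. -/
noncomputable def syndrome (F : Type*) {K : Type*} [Field F] [Field K] [Algebra F K]
    (n m : ℕ) (β : K) : (Fin n → F) →ₗ[F] (ZMod m → K) × F × K :=
  (LinearMap.pi fun s => evalOn (block n s) β).prod
    ((evalOn univ (1 : F)).prod (evalOn univ (β ^ 2)))

/-- The code of all words of length `n` whose `syndrome` vanishes. When `m` is invertible in `F`,
all blocks of a word vanish at `β` if and only if the word vanishes at `β * ζ` for every `m`-th
root of unity `ζ`, so this is the code defined by the zeros `1`, `β ^ 2` and all `β * ζ`. -/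
noncomputable def code (F : Type*) {K : Type*} [Field F] [Field K] [Algebra F K]
    (n m : ℕ) (β : K) : Submodule F (Fin n → F) :=
  LinearMap.ker (syndrome F n m β)

theorem mem_code : v ∈ code F n m β ↔
    (∀ s : ZMod m, evalOn (block n s) β v = 0) ∧ evalOn univ (1 : F) v = 0 ∧
      evalOn univ (β ^ 2) v = 0 := by
  simp [code, syndrome, funext_iff]

theorem isCyclic'_code [NeZero n] (hm : m ∣ n) (hβ : β ^ n = 1) : IsCyclic' (code F n m β) := by
  intro v hv
  obtain ⟨hblock, hone, hsq⟩ := mem_code.1 hv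
  have hβ2 : (β ^ 2) ^ n = 1 := by rw [pow_right_comm, hβ, one_pow]
  refine mem_code.2 ⟨fun s => ?_, ?_, ?_⟩
  · rw [evalOn_shift hβ fun i => mem_block_sub_one_iff hm, hblock, mul_zero]
  · rw [evalOn_shift (S := univ) (one_pow n) (by simp), hone, mul_zero]
  · rw [evalOn_shift (S := univ) hβ2 (by simp), hsq, mul_zero]

theorem le_finrank_code [NeZero m] [FiniteDimensional F K] :
    n ≤ Module.finrank F (code F n m β) + (m + 1) * Module.finrank F K + 1 := by
  have hrank := (syndrome F n m β).finrank_range_add_finrank_ker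
  have hrange := (LinearMap.range (syndrome F n m β)).finrank_le
  have hchecks : Module.finrank F ((ZMod m → K) × F × K) = (m + 1) * Module.finrank F K + 1 := by
    rw [Module.finrank_prod, Module.finrank_prod, Module.finrank_pi_fintype, Module.finrank_self,
      sum_const, card_univ, ZMod.card, smul_eq_mul]
    ring
  rw [Module.finrank_fintype_fun_eq_card, Fintype.card_fin] at hrank
  rw [code]
  omega

section Distance

variable [Fintype F]

theorem three_le_card_support_block (hβ : β ^ (Fintype.card F + 1) = 1)
    {s : ZMod m} (hinj : Set.InjOn (fun i : Fin n => (β ^ 2) ^ (i : ℕ)) (block n s))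
    (hv : v ∈ code F n m β) (hvs : ∃ i ∈ block n s, v i ≠ 0) :
    3 ≤ #{i ∈ block n s | v i ≠ 0} := by
  have hβ0 : β ≠ 0 := ne_zero_pow (Nat.succ_ne_zero _) (hβ ▸ one_ne_zero)
  have hroot := (mem_code.1 hv).1 s
  -- The consecutive zeros are `β⁻¹` and `β`, in geometric progression of ratio `β ^ 2`.
  refine lt_card_support_of_evalOn_eq_zero (inv_ne_zero hβ0) hinj (fun j hj => ?_) hvs
  interval_cases j
  · simpa using evalOn_inv_eq_zero hβ hroot
  · rwa [pow_one, sq, inv_mul_cancel_left₀ hβ0]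

theorem six_le_wt_of_support_subset_block (hβ : β ^ (Fintype.card F + 1) = 1)
    {s : ZMod m} (hinj : Set.InjOn (fun i : Fin n => β ^ (i : ℕ)) (block n s))
    (hv : v ∈ code F n m β) (hv0 : v ≠ 0) (hvs : ∀ i, v i ≠ 0 → i ∈ block n s) : 6 ≤ wt v := by
  have hβ0 : β ≠ 0 := ne_zero_pow (Nat.succ_ne_zero _) (hβ ▸ one_ne_zero)
  have hβ2 : (β ^ 2) ^ (Fintype.card F + 1) = 1 := by rw [pow_right_comm, hβ, one_pow]
  have hrestrict (x : K) : evalOn (block n s) x v = evalOn univ x v :=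
    evalOn_eq_of_subset (subset_univ _) fun i _ => hvs i
  obtain ⟨hblock, hone, hsq⟩ := mem_code.1 hv
  replace hone : evalOn univ (1 : K) v = 0 := by
    rw [← map_one (algebraMap F K), evalOn_algebraMap, hone, map_zero]
  rw [← hrestrict] at hone hsq
  obtain ⟨i, hi⟩ := Function.ne_iff.1 hv0
  have hlt : 5 < #{i ∈ block n s | v i ≠ 0} := by
    -- The consecutive zeros are `β ^ (-2)`, `β ^ (-1)`, `1`, `β`, `β ^ 2`.
    refine lt_card_support_of_evalOn_eq_zero (inv_ne_zero (pow_ne_zero 2 hβ0)) hinj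
      (fun j hj => ?_) ⟨i, hvs i hi, hi⟩
    interval_cases j
    · simpa using evalOn_inv_eq_zero hβ2 hsq
    · convert evalOn_inv_eq_zero hβ (hblock s) using 2
      field_simp
    · rwa [inv_mul_cancel₀ (pow_ne_zero 2 hβ0)]
    · convert hblock s using 2
      field_simp
    · convert hsq using 2
      field_simp
  exact hlt.trans_le (card_le_card (filter_subset_filter _ (subset_univ _)))

theorem minDistGe_code (hβ : β ^ (Fintype.card F + 1) = 1)
    (hinj : ∀ s : ZMod m, Set.InjOn (fun i : Fin n => (β ^ 2) ^ (i : ℕ)) (block n s)) :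
    MinDistGe (code F n m β : Set (Fin n → F)) 6 := by
  intro v hv hv0
  obtain ⟨i, hi⟩ := Function.ne_iff.1 hv0
  by_cases hvs : ∀ j, v j ≠ 0 → j ∈ block n ((i : ℕ) : ZMod m)
  · refine six_le_wt_of_support_subset_block hβ (fun j hj k hk hjk => ?_) hv hv0 hvs
    exact hinj _ hj hk (by simpa only [pow_right_comm β 2] using congrArg (· ^ 2) hjk)
  · push Not at hvs
    obtain ⟨j, hj, hij⟩ := hvs
    have hwt_i := three_le_card_support_block hβ (hinj _) hv ⟨i, mem_block.2 rfl, hi⟩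
    have hwt_j := three_le_card_support_block hβ (hinj _) hv ⟨j, mem_block.2 rfl, hj⟩
    have hdisj : Disjoint (block n ((i : ℕ) : ZMod m)) (block n ((j : ℕ) : ZMod m)) :=
      disjoint_left.2 fun k hki hkj =>
        hij (mem_block.2 ((mem_block.1 hkj).symm.trans (mem_block.1 hki)))
    have hunion := card_le_card (union_subset
      (filter_subset_filter (v · ≠ 0) (subset_univ (block n ((i : ℕ) : ZMod m))))
      (filter_subset_filter (v · ≠ 0) (subset_univ (block n ((j : ℕ) : ZMod m)))))
    rw [card_union_of_disjoint (disjoint_filter_filter hdisj)] at hunion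
    exact (Nat.add_le_add hwt_i hwt_j).trans hunion

theorem hasLocality_code {r : ℕ} (hβ : β ^ (Fintype.card F + 1) = 1) (hβr : β ^ (r + 2) = 1)
    (hinj : ∀ s : ZMod m, Set.InjOn (fun i : Fin n => (β ^ 2) ^ (i : ℕ)) (block n s)) :
    HasLocality (code F n m β : Set (Fin n → F)) r 3 := by
  have hβ2 : (β ^ 2) ^ (r + 2) = 1 := by rw [pow_right_comm, hβr, one_pow]
  exact fun i => ⟨block n ((i : ℕ) : ZMod m), mem_block.2 rfl,
    card_le_of_pow_injOn (Nat.succ_pos _) hβ2 (hinj _), fun v hv =>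
      three_le_card_support_block hβ (hinj _) hv⟩

end Distance

end CyclicLRC

theorem exists_optimal_cyclic_LRC_delta_three_dist_six_general (F : Type*) [Field F] [Fintype F]
    (n r : ℕ) [NeZero n] (hodd : Odd (r + 2)) (hr : 4 ≤ r) (hrn : r + 2 ∣ n)
    (hrq : r + 2 ∣ Fintype.card F + 1) (hco : (n / (r + 2)).Coprime (r + 2)) :
    ∃ C : Submodule F (Fin n → F),
      IsCyclic' C ∧
      Module.finrank F C = r * n / (r + 2) - 3 ∧
      MinDistIs (C : Set (Fin n → F)) 6 ∧
      HasLocality (C : Set (Fin n → F)) r 3 ∧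
      IsOptimalParams n (r * n / (r + 2) - 3) 6 r 3 := by
  obtain ⟨K, _, _, β, hK, hβ⟩ := exists_field_extension_isPrimitiveRoot F (e := 2)
    (hrq.trans ⟨Fintype.card F - 1, by rw [← Nat.sq_sub_sq, one_pow]⟩)
  have : FiniteDimensional F K := Module.finite_of_finrank_eq_succ hK
  obtain ⟨l, hl⟩ : ∃ l, n / (r + 2) = l + 1 := Nat.exists_eq_add_one.2 (Nat.div_pos
    (Nat.le_of_dvd (NeZero.pos n) hrn) (Nat.succ_pos _))
  have hn : n = (l + 1) * (r + 2) := hl ▸ (Nat.div_mul_cancel hrn).symm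
  rw [Nat.mul_div_assoc r hrn, hl, mul_comm r]
  have hinj := CyclicLRC.pow_injOn_block hn.le (hl ▸ hco)
    (hβ.pow_of_coprime 2 (Nat.coprime_two_left.2 hodd))
  have hβq : β ^ (Fintype.card F + 1) = 1 := (hβ.pow_eq_one_iff_dvd _).2 hrq
  have hloc := CyclicLRC.hasLocality_code (F := F) hβq hβ.pow_eq_one hinj
  have hdist := CyclicLRC.minDistGe_code hβq hinj
  have hdim := CyclicLRC.le_finrank_code (F := F) (n := n) (m := l + 1) (β := β)
  rw [hK] at hdim
  have hlen : n = (l + 1) * r + 2 * (l + 1) := hn.trans (by ring)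
  have hsucc : (l + 1) * r = l * r + r := Nat.succ_mul l r
  have hk : (l + 1) * r - 3 ≤ Module.finrank F (CyclicLRC.code F n (l + 1) β) := by omega
  have hlr : l * r < (l + 1) * r - 3 := by omega
  have hparams : 6 + ((l + 1) * r - 3) + l * (3 - 1) = n + 1 := by omega
  exact ⟨CyclicLRC.code F n (l + 1) β,
    CyclicLRC.isCyclic'_code ⟨_, hn⟩ ((hβ.pow_eq_one_iff_dvd n).2 hrn),
    hloc.finrank_eq hdist hlr hk hparams, hloc.minDistIs hdist hlr hk hparams, hloc,
    (isOptimalParams_iff hlr (Nat.sub_le _ _) (by norm_num)).2 hparams⟩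

/-- **Theorem 4 / main result (iv).** If `n` is odd, `gcd(n,q) = 1`, `r ≥ 4`,
`(r+2) ∣ gcd(n, q+1)` and `gcd(n/(r+2), r+2) = 1`, then there exists a `q`-ary optimal
cyclic `(r,3)`-LRC of length `n`, dimension `k = rn/(r+2) - 3` and minimum distance `6`,
achieving the Singleton-type bound. -/
theorem exists_optimal_cyclic_LRC_delta_three_dist_six (F : Type*) [Field F] [Fintype F]
    (q n r : ℕ) (hq : Fintype.card F = q) [NeZero n] (hodd : Odd n)
    (hcop : Nat.Coprime n q)
    (hr : 4 ≤ r) (hdvd : (r + 2) ∣ Nat.gcd n (q + 1))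
    (hgcd : Nat.gcd (n / (r + 2)) (r + 2) = 1) :
    ∃ C : Submodule F (Fin n → F),
      IsCyclic' C ∧
      Module.finrank F C = r * n / (r + 2) - 3 ∧
      MinDistIs (C : Set (Fin n → F)) 6 ∧
      HasLocality (C : Set (Fin n → F)) r 3 ∧
      IsOptimalParams n (r * n / (r + 2) - 3) 6 r 3 := by
  have hrn : r + 2 ∣ n := hdvd.trans (Nat.gcd_dvd_left _ _)
  exact exists_optimal_cyclic_LRC_delta_three_dist_six_general F n r (hodd.of_dvd_nat hrn) hr hrn
    (hq ▸ hdvd.trans (Nat.gcd_dvd_right _ _)) hgcd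
end
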